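/- arXiv:0809.4116 — 7 statements merged into one kernel-verified Lean document; each statement's English description precedes it below -/
import Mathlib

section
/- Let G be a finite group, p a prime, S a Sylow p-subgroup of G, and R a subgroup of S. If N₁ and N₂ are normal subgroups of G such that R ∩ N₁ is a Sylow p-subgroup of N₁ and R ∩ N₂ is a Sylow p-subgroup of N₂, then R ∩ N₁N₂ is a Sylow p-subgroup of the product N₁N₂ (the join of N₁ and N₂). -/
/-!
For normal `N`, the second isomorphism theorem gives `[RN : R] = [N : R ∩ N]`
(`relIndex_self_sup_of_normal`). Hence, for a `p`-group `R`, the subgroup `R ∩ N` is Sylow in `N`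
if and only if `p ∤ [RN : R]`. The index `[RN₁N₂ : R]` is `[RN₁N₂ : RN₁] * [RN₁ : R]`, whose second
factor is `[N₁ : R ∩ N₁]` and whose first factor `[N₂ : RN₁ ∩ N₂]` divides `[N₂ : R ∩ N₂]`. So it is prime to
`p`, which is the claim for the normal subgroup `N₁N₂`.
-/

/-- `K` is a Sylow `p`-subgroup of the subgroup `H` of the ambient group:
`K` is a `p`-subgroup contained in `H`, maximal among `p`-subgroups of `H`. -/
def IsSylowIn {G : Type*} [Group G] (p : ℕ) (K H : Subgroup G) : Prop :=
  K ≤ H ∧ IsPGroup p K ∧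
    ∀ Q : Subgroup G, Q ≤ H → IsPGroup p Q → K ≤ Q → Q = K

/-- `R` is strongly closed in `S` with respect to the ambient group. -/
def IsStronglyClosedIn {G : Type*} [Group G] (R S : Subgroup G) : Prop :=
  ∀ x ∈ R, ∀ g : G, g * x * g⁻¹ ∈ S → g * x * g⁻¹ ∈ R

/-- The `p`-socle of the subgroup `H`: the subgroup generated by the
elements of order `p` in `H`. -/
def Omega1 {G : Type*} [Group G] (p : ℕ) (H : Subgroup G) : Subgroup G :=
  Subgroup.closure {x : G | x ∈ H ∧ orderOf x = p}

theorem relIndex_self_sup_of_normal {G : Type*} [Group G] [Finite G] (R N : Subgroup G)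
    [N.Normal] : R.relIndex (R ⊔ N) = R.relIndex N := by
  have h1 := Subgroup.relIndex_mul_relIndex ⊥ R (R ⊔ N) bot_le le_sup_left
  have h2 := Subgroup.relIndex_mul_relIndex ⊥ N (R ⊔ N) bot_le le_sup_right
  have h3 := Subgroup.relIndex_mul_relIndex ⊥ (R ⊓ N) R bot_le inf_le_left
  have h4 := Subgroup.relIndex_mul_relIndex ⊥ (R ⊓ N) N bot_le inf_le_right
  rw [Subgroup.relIndex_sup_right] at h2
  rw [Subgroup.inf_relIndex_left] at h3
  rw [Subgroup.inf_relIndex_right] at h4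
  simp only [Subgroup.relIndex_bot_left] at h1 h2 h3 h4
  -- Both sides become equal after multiplication by `|R|`.
  apply Nat.eq_of_mul_eq_mul_left (Nat.card_pos (α := R))
  rw [h1, ← h2, ← h3, ← h4]
  ring

/-- Sylow's theorem: a maximal `p`-subgroup of `N` has index prime to `p` in `N`. -/
theorem IsSylowIn.not_dvd_relIndex {G : Type*} [Group G] [Finite G] {p : ℕ} (hp : p.Prime)
    {K N : Subgroup G} (h : IsSylowIn p K N) : ¬ p ∣ K.relIndex N := by
  have := Fact.mk hp
  obtain ⟨hKN, hK, hmax⟩ := h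
  let P : Sylow p N :=
    { toSubgroup := K.subgroupOf N
      isPGroup' := hK.comap_of_injective N.subtype N.subtype_injective
      is_maximal' := by
        intro Q hQ hle
        have hQK : Q.map N.subtype = K := by
          refine hmax _ (Subgroup.map_subtype_le Q) (hQ.map _) ?_
          rw [← Subgroup.map_subgroupOf_eq_of_le hKN]
          exact Subgroup.map_mono hle
        rw [← hQK, Subgroup.subgroupOf, Subgroup.comap_map_eq_self_of_injective
          N.subtype_injective] }
  exact P.not_dvd_index

theorem isSylowIn_of_not_dvd_relIndex {G : Type*} [Group G] [Finite G] {p : ℕ} (hp : p.Prime)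
    {K N : Subgroup G} (hKN : K ≤ N) (hK : IsPGroup p K) (h : ¬ p ∣ K.relIndex N) :
    IsSylowIn p K N := by
  have := Fact.mk hp
  refine ⟨hKN, hK, fun Q hQN hQ hKQ => le_antisymm ?_ hKQ⟩
  rw [← Subgroup.relIndex_eq_one]
  -- `[Q : K]` is a power of `p` dividing `[N : K]`.
  obtain ⟨n, hn⟩ := hQ.index (K.subgroupOf Q)
  change K.relIndex Q = p ^ n at hn
  have hdvd : K.relIndex Q ∣ K.relIndex N :=
    Dvd.intro _ (Subgroup.relIndex_mul_relIndex K Q N hKQ hQN)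
  rcases Nat.eq_zero_or_pos n with rfl | hpos
  · simpa using hn
  · exact absurd (((dvd_pow_self p hpos.ne').trans hn.symm.dvd).trans hdvd) h

theorem sylow_inter_join
    {G : Type*} [Group G] [Fintype G] {p : ℕ} (hp : p.Prime)
    (S R N₁ N₂ : Subgroup G) (hS : IsSylowIn p S ⊤) (hRS : R ≤ S)
    (h1 : N₁.Normal) (h2 : N₂.Normal)
    (hRN1 : IsSylowIn p (R ⊓ N₁) N₁) (hRN2 : IsSylowIn p (R ⊓ N₂) N₂) :
    IsSylowIn p (R ⊓ (N₁ ⊔ N₂)) (N₁ ⊔ N₂) := by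
  have hS' : IsPGroup p R := hS.2.1.to_le hRS
  have hd1 := hRN1.not_dvd_relIndex hp
  have hd2 := hRN2.not_dvd_relIndex hp
  rw [Subgroup.inf_relIndex_right] at hd1 hd2
  refine isSylowIn_of_not_dvd_relIndex hp inf_le_right (hS'.to_le inf_le_left) ?_
  rw [Subgroup.inf_relIndex_right, ← relIndex_self_sup_of_normal, ← sup_assoc,
    ← Subgroup.relIndex_mul_relIndex R (R ⊔ N₁) _ le_sup_left le_sup_left,
    relIndex_self_sup_of_normal, relIndex_self_sup_of_normal, hp.dvd_mul]
  rintro (h | h)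
  · exact hd1 h
  · exact hd2 (h.trans (Subgroup.relIndex_dvd_of_le_left N₂ le_sup_left))
end

section
/- Let G be a finite group, p a prime, S a Sylow p-subgroup of G, and R a subgroup of S. Then there exists a unique normal subgroup N of G satisfying: (i) R ∩ N is a Sylow p-subgroup of N, and (ii) every normal subgroup M of G such that R ∩ M is a Sylow p-subgroup of M satisfies M ≤ N. (This unique largest such normal subgroup is denoted 𝒪_R(G).) -/
/-- `|HK : H| = |K : H ∩ K|` for `K` normal. Here `H` need not be normal, unlike in
`Subgroup.relIndex_sup_left`, so the identity is obtained by comparing orders. -/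
theorem relIndex_sup_of_normal {G : Type*} [Group G] [Finite G] (H K : Subgroup G) [K.Normal] :
    H.relIndex (H ⊔ K) = H.relIndex K := by
  have h1 := Subgroup.relIndex_mul_relIndex ⊥ H (H ⊔ K) bot_le le_sup_left
  have h2 := Subgroup.relIndex_mul_relIndex ⊥ K (H ⊔ K) bot_le le_sup_right
  have h3 := Subgroup.relIndex_mul_relIndex ⊥ (H ⊓ K) H bot_le inf_le_left
  have h4 := Subgroup.relIndex_mul_relIndex ⊥ (H ⊓ K) K bot_le inf_le_right
  rw [Subgroup.relIndex_sup_right] at h2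
  rw [Subgroup.inf_relIndex_left] at h3
  rw [Subgroup.inf_relIndex_right] at h4
  simp only [Subgroup.relIndex_bot_left] at h1 h2 h3 h4
  have hpos : 0 < Nat.card H := Nat.card_pos
  apply Nat.eq_of_mul_eq_mul_left hpos
  rw [h1, ← h2, ← h4, ← h3]
  ring

theorem relIndex_sup_dvd {G : Type*} [Group G] [Finite G] (R M N : Subgroup G)
    [M.Normal] [N.Normal] :
    R.relIndex (M ⊔ N) ∣ R.relIndex N * R.relIndex M := by
  have h1 : R.relIndex (M ⊔ N) = R.relIndex N * (R ⊔ N).relIndex M := by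
    rw [← relIndex_sup_of_normal R (M ⊔ N), ← relIndex_sup_of_normal R N,
      ← relIndex_sup_of_normal (R ⊔ N) M, sup_comm M N, ← sup_assoc]
    exact (Subgroup.relIndex_mul_relIndex _ _ _ le_sup_left le_sup_left).symm
  rw [h1]
  exact mul_dvd_mul_left _ (Subgroup.relIndex_dvd_of_le_left M le_sup_left)

theorem isSylowIn_inf_iff {G : Type*} [Group G] [Finite G] {p : ℕ} (hp : p.Prime)
    {R : Subgroup G} (hR : IsPGroup p R) (M : Subgroup G) :
    IsSylowIn p (R ⊓ M) M ↔ ¬ p ∣ R.relIndex M := by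
  have := Fact.mk hp
  constructor
  · rintro ⟨-, -, hmax⟩
    let P : Sylow p M :=
      { toSubgroup := R.subgroupOf M
        isPGroup' := hR.comap_subtype
        is_maximal' := by
          intro Q hQ hle
          have h := hmax (Q.map M.subtype) (Subgroup.map_subtype_le Q) (hQ.map _) (by
            rw [← Subgroup.subgroupOf_map_subtype]
            exact Subgroup.map_mono hle)
          rw [← Subgroup.subgroupOf_map_subtype] at h
          exact Subgroup.map_injective M.subtype_injective h }
    exact P.not_dvd_index
  · intro h
    refine ⟨inf_le_right, hR.to_le inf_le_left, fun Q hQM hQ hle => le_antisymm ?_ hle⟩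
    obtain ⟨n, hn⟩ := hQ.index ((R ⊓ M).subgroupOf Q)
    have hmul := Subgroup.relIndex_mul_relIndex _ _ _ hle hQM
    rw [Subgroup.inf_relIndex_right] at hmul
    rcases Nat.eq_zero_or_pos n with rfl | hpos
    · exact Subgroup.relIndex_eq_one.mp (by simpa using hn)
    · refine absurd ?_ h
      rw [← hmul]
      exact Dvd.dvd.mul_right ((dvd_pow_self p hpos.ne').trans (dvd_of_eq hn.symm)) _

theorem exists_unique_largest_normal_sylow_intersection
    {G : Type*} [Group G] [Fintype G] {p : ℕ} (hp : p.Prime)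
    (S R : Subgroup G) (hS : IsSylowIn p S ⊤) (hRS : R ≤ S) :
    ∃! N : Subgroup G, N.Normal ∧ IsSylowIn p (R ⊓ N) N ∧
      ∀ M : Subgroup G, M.Normal → IsSylowIn p (R ⊓ M) M → M ≤ N := by
  have hR : IsPGroup p R := hS.2.1.to_le hRS
  simp only [isSylowIn_inf_iff hp hR]
  obtain ⟨N, ⟨hN, hNp⟩, hmax⟩ :=
    (Set.toFinite {N : Subgroup G | N.Normal ∧ ¬ p ∣ R.relIndex N}).exists_maximal
      ⟨⊥, inferInstance, by simpa using hp.ne_one⟩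
  have hlargest : ∀ M : Subgroup G, M.Normal → ¬ p ∣ R.relIndex M → M ≤ N := fun M hM hMp => by
    have hsup : ¬ p ∣ R.relIndex (M ⊔ N) := fun h =>
      (hp.dvd_mul.mp (h.trans (relIndex_sup_dvd R M N))).elim hNp hMp
    exact le_sup_left.trans (hmax ⟨inferInstance, hsup⟩ le_sup_right)
  refine ⟨N, ⟨hN, hNp, hlargest⟩, ?_⟩
  rintro N' ⟨hN', hNp', hle⟩
  exact le_antisymm (hlargest N' hN' hNp') (hle N hN hNp)
end

section
/- Let G be a finite group, p a prime, S a Sylow p-subgroup of G, and R a subgroup of S. Let N be a normal subgroup of G such that R ∩ N is a Sylow p-subgroup of N and such that every normal subgroup M of G with R ∩ M a Sylow p-subgroup of M satisfies M ≤ N (i.e., N = 𝒪_R(G)). Then R is a Sylow p-subgroup of the normal closure ⟨R^G⟩ of R in G if and only if R ≤ N. -/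
theorem sylow_in_normalClosure_iff_le_O
    {G : Type*} [Group G] [Fintype G] {p : ℕ} (hp : p.Prime)
    (S R N : Subgroup G) (hS : IsSylowIn p S ⊤) (hRS : R ≤ S)
    (hN : N.Normal) (hNs : IsSylowIn p (R ⊓ N) N)
    (hNmax : ∀ M : Subgroup G, M.Normal → IsSylowIn p (R ⊓ M) M → M ≤ N) :
    IsSylowIn p R (Subgroup.normalClosure (R : Set G)) ↔ R ≤ N := by
  have hle : R ≤ Subgroup.normalClosure (R : Set G) := Subgroup.le_normalClosure
  constructor
  · -- `R = R ⊓ ⟨R^G⟩` is Sylow in `⟨R^G⟩`, so maximality of `N` applies to `⟨R^G⟩`.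
    intro h
    refine hle.trans (hNmax _ inferInstance ?_)
    rwa [inf_eq_left.mpr hle]
  · -- `⟨R^G⟩ ≤ N`, so a `p`-subgroup of `⟨R^G⟩` containing `R` competes with `R` inside `N`.
    intro h
    rw [inf_eq_left.mpr h] at hNs
    have hcl : Subgroup.normalClosure (R : Set G) ≤ N := Subgroup.normalClosure_le_normal h
    exact ⟨hle, hNs.2.1, fun Q hQ hQp hRQ => hNs.2.2 Q (hQ.trans hcl) hQp hRQ⟩
end

section
/- Let G be a finite group, p a prime, S a Sylow p-subgroup of G, and R a subgroup of S. Let N be a normal subgroup of G such that R ∩ N is a Sylow p-subgroup of N and such that every normal subgroup M of G with R ∩ M a Sylow p-subgroup of M satisfies M ≤ N (i.e., N = 𝒪_R(G)). Let R̄ denote the image of R in Ḡ = G/N. Then 𝒪_{R̄}(Ḡ) = 1; that is, every normal subgroup M̄ of Ḡ such that R̄ ∩ M̄ is a Sylow p-subgroup of M̄ is the trivial subgroup. -/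
/-- Being Sylow lifts along an extension: the Sylow property on `N` and on the quotient by `N`
yields the Sylow property on the preimage. -/
theorem isSylowIn_comap_mk {G : Type*} [Group G] {p : ℕ} {R N : Subgroup G} [N.Normal]
    (hR : IsPGroup p R) (hNs : IsSylowIn p (R ⊓ N) N) {M : Subgroup (G ⧸ N)}
    (hM : IsSylowIn p (R.map (QuotientGroup.mk' N) ⊓ M) M) :
    IsSylowIn p (R ⊓ M.comap (QuotientGroup.mk' N)) (M.comap (QuotientGroup.mk' N)) := by
  refine ⟨inf_le_right, hR.to_le inf_le_left, fun Q hQL hQp hRQ => ?_⟩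
  have hmap : Q.map (QuotientGroup.mk' N) = R.map (QuotientGroup.mk' N) ⊓ M := by
    refine hM.2.2 _ (Subgroup.map_le_iff_le_comap.2 hQL) (hQp.map _) ?_
    rintro _ ⟨⟨r, hr, rfl⟩, hrM⟩
    exact ⟨r, hRQ ⟨hr, hrM⟩, rfl⟩
  have hN : N ≤ M.comap (QuotientGroup.mk' N) := fun n hn => by
    rw [Subgroup.mem_comap, QuotientGroup.mk'_apply, (QuotientGroup.eq_one_iff n).2 hn]
    exact M.one_mem
  have hinf : Q ⊓ N = R ⊓ N :=
    hNs.2.2 _ inf_le_right (hQp.to_le inf_le_left)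
      (le_inf ((inf_le_inf_left R hN).trans hRQ) inf_le_right)
  refine le_antisymm (fun q hq => ⟨?_, hQL hq⟩) hRQ
  obtain ⟨r, hr, hrq⟩ : QuotientGroup.mk' N q ∈ R.map (QuotientGroup.mk' N) :=
    (hmap.le (Subgroup.mem_map_of_mem _ hq)).1
  have hrL : QuotientGroup.mk' N r ∈ M := by
    rw [hrq]
    exact hQL hq
  have hn : r⁻¹ * q ∈ R ⊓ N := by
    rw [← hinf]
    exact ⟨Q.mul_mem (Q.inv_mem (hRQ ⟨hr, hrL⟩)) hq, QuotientGroup.eq.1 hrq⟩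
  simpa using R.mul_mem hr hn.1

theorem O_of_quotient_eq_bot
    {G : Type*} [Group G] [Fintype G] {p : ℕ} (hp : p.Prime)
    (S R N : Subgroup G) (hS : IsSylowIn p S ⊤) (hRS : R ≤ S)
    [hN : N.Normal] (hNs : IsSylowIn p (R ⊓ N) N)
    (hNmax : ∀ M : Subgroup G, M.Normal → IsSylowIn p (R ⊓ M) M → M ≤ N) :
    ∀ M : Subgroup (G ⧸ N), M.Normal →
      IsSylowIn p (R.map (QuotientGroup.mk' N) ⊓ M) M → M = ⊥ := by
  intro M hMn hM
  have hle := hNmax _ (hMn.comap (QuotientGroup.mk' N))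
    (isSylowIn_comap_mk (hS.2.1.to_le hRS) hNs hM)
  refine (Subgroup.eq_bot_iff_forall M).2 fun x hx => ?_
  obtain ⟨g, rfl⟩ := QuotientGroup.mk'_surjective N x
  exact (QuotientGroup.eq_one_iff g).2 (hle hx)
end

section
/- Let G be a finite group, p a prime, S a Sylow p-subgroup of G, and let R ≤ S be strongly closed in S with respect to G. Let N be any normal subgroup of G and π : G → G/N the canonical projection. Then π(S) is a Sylow p-subgroup of G/N, π(R) ≤ π(S), and π(R) is strongly closed in π(S) with respect to G/N. -/
/-- A cyclic `p`-subgroup of `P ⊔ N`, with `P` Sylow and `N` normal, is conjugate into `P` by an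
element of `N`. -/
theorem exists_conj_mem_of_mem_sup {G : Type*} [Group G] [Finite G] {p : ℕ} [Fact p.Prime]
    (P : Sylow p G) (N : Subgroup G) [N.Normal] {y : G} (hy : y ∈ (P : Subgroup G) ⊔ N)
    (hyp : IsPGroup p (Subgroup.zpowers y)) : ∃ n ∈ N, n * y * n⁻¹ ∈ P := by
  have hPK : (P : Subgroup G) ≤ (P : Subgroup G) ⊔ N := le_sup_left
  have hZ : IsPGroup p ((Subgroup.zpowers y).subgroupOf ((P : Subgroup G) ⊔ N)) :=
    hyp.comap_of_injective _ (Subgroup.subtype_injective _)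
  obtain ⟨Q, hQ⟩ := hZ.exists_le_sylow
  obtain ⟨k, hk⟩ := MulAction.exists_smul_eq ((P : Subgroup G) ⊔ N : Subgroup G) Q (P.subtype hPK)
  have hyQ : (⟨y, hy⟩ : ((P : Subgroup G) ⊔ N : Subgroup G)) ∈ (Q : Subgroup _) :=
    hQ (Subgroup.mem_subgroupOf.2 (Subgroup.mem_zpowers y))
  have hconj := Subgroup.smul_mem_pointwise_smul _ (MulAut.conj k) _ hyQ
  rw [← Sylow.coe_subgroup_smul, hk, Sylow.coe_subtype, Subgroup.mem_subgroupOf] at hconj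
  have hkS : (k : G) * y * (k : G)⁻¹ ∈ (P : Subgroup G) := hconj
  obtain ⟨s, hs, n, hn, hsn⟩ := Subgroup.mem_sup_of_normal_right.1 k.2
  refine ⟨n, hn, ?_⟩
  rw [← hsn] at hkS
  have h := mul_mem (mul_mem (inv_mem hs) hkS) hs
  have e : s⁻¹ * (s * n * y * (s * n)⁻¹) * s = n * y * n⁻¹ := by group
  rwa [e] at h

theorem stronglyClosed_map_quotient
    {G : Type*} [Group G] [Fintype G] {p : ℕ} (hp : p.Prime)
    (S R N : Subgroup G) (hS : IsSylowIn p S ⊤) (hRS : R ≤ S)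
    (hsc : IsStronglyClosedIn R S) [hN : N.Normal] :
    IsSylowIn p (S.map (QuotientGroup.mk' N)) ⊤ ∧
    R.map (QuotientGroup.mk' N) ≤ S.map (QuotientGroup.mk' N) ∧
    IsStronglyClosedIn (R.map (QuotientGroup.mk' N))
      (S.map (QuotientGroup.mk' N)) := by
  have : Fact p.Prime := ⟨hp⟩
  obtain ⟨P, rfl⟩ : ∃ P : Sylow p G, (P : Subgroup G) = S :=
    ⟨⟨S, hS.2.1, fun hQ hle => hS.2.2 _ le_top hQ hle⟩, rfl⟩
  refine ⟨⟨le_top, hS.2.1.map _, fun Q _ hQ hle => ?_⟩, Subgroup.map_mono hRS, ?_⟩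
  · exact (P.mapSurjective (QuotientGroup.mk'_surjective N)).is_maximal' hQ hle
  · rintro _ ⟨x, hx, rfl⟩ g' hg'
    obtain ⟨g, rfl⟩ := QuotientGroup.mk'_surjective N g'
    rw [← map_inv, ← map_mul, ← map_mul] at hg' ⊢
    have hy : g * x * g⁻¹ ∈ (P : Subgroup G) ⊔ N := by
      rwa [← Subgroup.mem_comap, Subgroup.comap_map_eq, QuotientGroup.ker_mk'] at hg'
    have hyp : IsPGroup p (Subgroup.zpowers (g * x * g⁻¹)) := by
      have hxp : IsPGroup p (Subgroup.zpowers x) :=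
        hS.2.1.to_le ((Subgroup.zpowers_le).2 (hRS hx))
      have h := hxp.map (MulAut.conj g).toMonoidHom
      rwa [MonoidHom.map_zpowers] at h
    obtain ⟨n, hn, hnS⟩ := exists_conj_mem_of_mem_sup P N hy hyp
    have e : n * (g * x * g⁻¹) * n⁻¹ = (n * g) * x * (n * g)⁻¹ := by group
    have hR : n * (g * x * g⁻¹) * n⁻¹ ∈ R := by
      rw [e] at hnS ⊢
      exact hsc x hx (n * g) hnS
    refine ⟨_, hR, ?_⟩
    have h1 : QuotientGroup.mk' N n = 1 := (QuotientGroup.eq_one_iff n).2 hn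
    rw [map_mul _ (n * (g * x * g⁻¹)), map_mul _ n, map_inv _ n, h1, inv_one, one_mul, mul_one]
end

section
/- Let p be a prime, let π : G → G₀ be a surjective homomorphism of finite groups, let S₀ be a Sylow p-subgroup of G₀, and let A₀ ≤ S₀ be strongly closed in S₀ with respect to G₀. Let A be a Sylow p-subgroup of the preimage π⁻¹(A₀). Then: (i) there is a Sylow p-subgroup S of G with A ≤ S, and A is strongly closed in S with respect to G; and (ii) A ∩ ker π is a Sylow p-subgroup of ker π, so that ker π ≤ 𝒪_A(G). -/
theorem isSylowIn_iff {G : Type*} [Group G] [Finite G] {p : ℕ} (hp : p.Prime)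
    {K H : Subgroup G} :
    IsSylowIn p K H ↔ K ≤ H ∧ IsPGroup p K ∧ ¬ p ∣ K.relIndex H := by
  have := Fact.mk hp
  refine and_congr_right fun hKH => and_congr_right fun hK => ⟨fun hmax => ?_, ?_⟩
  · obtain ⟨Q, hQ⟩ := (hK.comap_subtype (K := H)).exists_le_sylow
    have hle : K ≤ (Q : Subgroup H).map H.subtype := by
      intro x hx
      exact ⟨⟨x, hKH hx⟩, hQ (by simpa [Subgroup.mem_subgroupOf] using hx), rfl⟩
    have h := hmax _ (Subgroup.map_subtype_le _) (Q.isPGroup'.map _) hle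
    have hQK : (Q : Subgroup H) = K.subgroupOf H := by
      rw [← h, Subgroup.subgroupOf,
        Subgroup.comap_map_eq_self_of_injective H.subtype_injective]
    rw [Subgroup.relIndex, ← hQK]
    exact Q.not_dvd_index
  · intro hdvd Q hQH hQ hKQ
    -- `Q` is a `p`-group, so the index of `K` in `Q` is a power of `p`.
    obtain ⟨n, hn⟩ := hQ.index (K.subgroupOf Q)
    have hmul := Subgroup.relIndex_mul_relIndex K Q H hKQ hQH
    have h1 : K.relIndex Q = 1 := by
      rcases Nat.eq_zero_or_pos n with rfl | hpos
      · simpa [Subgroup.relIndex] using hn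
      · exfalso
        apply hdvd
        rw [← hmul, Subgroup.relIndex, hn]
        exact (dvd_pow_self p hpos.ne').mul_right _
    exact le_antisymm (Subgroup.relIndex_eq_one.mp h1) hKQ

theorem exists_isSylowIn_ge {G : Type*} [Group G] {p : ℕ} {K H : Subgroup G}
    (hKH : K ≤ H) (hK : IsPGroup p K) : ∃ S : Subgroup G, IsSylowIn p S H ∧ K ≤ S := by
  obtain ⟨Q, hQ⟩ := (hK.comap_subtype (K := H)).exists_le_sylow
  have hle : K ≤ (Q : Subgroup H).map H.subtype := by
    intro x hx
    exact ⟨⟨x, hKH hx⟩, hQ (by simpa [Subgroup.mem_subgroupOf] using hx), rfl⟩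
  refine ⟨_, ⟨Subgroup.map_subtype_le _, Q.isPGroup'.map _, fun R hRH hR hQR => ?_⟩, hle⟩
  have h := Q.is_maximal' (hR.comap_subtype (K := H)) (Subgroup.map_le_iff_le_comap.mp hQR)
  rw [← h, ← Subgroup.subgroupOf, Subgroup.subgroupOf_map_subtype, inf_eq_left.mpr hRH]

/-- The index form of the second isomorphism theorem, for `A` not assumed normal:
`[N : A ∩ N] = [AN : A]`. -/
theorem relIndex_eq_relIndex_sup_of_normal {G : Type*} [Group G] [Finite G]
    (A N : Subgroup G) [N.Normal] : A.relIndex N = A.relIndex (A ⊔ N) := by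
  have h1 := Subgroup.relIndex_mul_relIndex ⊥ (A) (A ⊔ N) bot_le le_sup_left
  have h2 := Subgroup.relIndex_mul_relIndex ⊥ (N) (A ⊔ N) bot_le le_sup_right
  have h3 := Subgroup.relIndex_mul_relIndex ⊥ (A ⊓ N) (A) bot_le inf_le_left
  have h4 := Subgroup.relIndex_mul_relIndex ⊥ (A ⊓ N) (N) bot_le inf_le_right
  simp only [Subgroup.relIndex_bot_left] at h1 h2 h3 h4
  rw [Subgroup.relIndex_sup_right] at h2
  rw [Subgroup.inf_relIndex_left] at h3
  rw [Subgroup.inf_relIndex_right] at h4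
  apply Nat.eq_of_mul_eq_mul_left (Nat.card_pos (α := A))
  rw [h1, ← h2, ← h3, ← h4]
  ring

theorem IsSylowIn.inf_normal {G : Type*} [Group G] [Finite G] {p : ℕ} (hp : p.Prime)
    {A H N : Subgroup G} [N.Normal] (hA : IsSylowIn p A H) (hN : N ≤ H) :
    IsSylowIn p (A ⊓ N) N := by
  obtain ⟨hAH, hAp, hdvd⟩ := (isSylowIn_iff hp).mp hA
  refine (isSylowIn_iff hp).mpr ⟨inf_le_right, hAp.to_le inf_le_left, fun h => hdvd ?_⟩
  rw [Subgroup.inf_relIndex_right, relIndex_eq_relIndex_sup_of_normal] at h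
  exact h.trans (Dvd.intro _
    (Subgroup.relIndex_mul_relIndex A (A ⊔ N) H le_sup_left (sup_le hAH hN)))

theorem sylow_of_preimage_stronglyClosed
    {G G₀ : Type*} [Group G] [Fintype G] [Group G₀] [Fintype G₀]
    {p : ℕ} (hp : p.Prime)
    (π : G →* G₀) (hπ : Function.Surjective π)
    (S₀ A₀ : Subgroup G₀) (hS₀ : IsSylowIn p S₀ ⊤) (hA₀S₀ : A₀ ≤ S₀)
    (hsc₀ : IsStronglyClosedIn A₀ S₀)
    (A : Subgroup G) (hA : IsSylowIn p A (A₀.comap π)) :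
    (∃ S : Subgroup G, IsSylowIn p S ⊤ ∧ A ≤ S ∧ IsStronglyClosedIn A S) ∧
    IsSylowIn p (A ⊓ π.ker) π.ker ∧
    (∀ N : Subgroup G, N.Normal → IsSylowIn p (A ⊓ N) N →
      (∀ M : Subgroup G, M.Normal → IsSylowIn p (A ⊓ M) M → M ≤ N) →
      π.ker ≤ N) := by
  have hker : IsSylowIn p (A ⊓ π.ker) π.ker := hA.inf_normal hp (π.ker_le_comap A₀)
  refine ⟨?_, hker, fun N _ _ hmax => hmax π.ker inferInstance hker⟩
  obtain ⟨S, hS, hAS⟩ := exists_isSylowIn_ge (hA.1.trans (Subgroup.comap_mono hA₀S₀)) hA.2.1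
  refine ⟨S, ?_, hAS, fun x hx g hg => ?_⟩
  · obtain ⟨hSK, hSp, hSd⟩ := (isSylowIn_iff hp).mp hS
    obtain ⟨-, -, hd₀⟩ := (isSylowIn_iff hp).mp hS₀
    refine (isSylowIn_iff hp).mpr ⟨le_top, hSp, ?_⟩
    rw [Subgroup.relIndex_top_right] at hd₀ ⊢
    rw [← Subgroup.relIndex_mul_index hSK, Subgroup.index_comap_of_surjective _ hπ]
    exact hp.not_dvd_mul hSd hd₀
  · have hSA : S ⊓ A₀.comap π = A :=
      hA.2.2 _ inf_le_right (hS.2.1.to_le inf_le_left) (le_inf hAS hA.1)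
    have hgS₀ : π g * π x * (π g)⁻¹ ∈ S₀ := by simpa using hS.1 hg
    have hgA₀ := hsc₀ (π x) (hA.1 hx) (π g) hgS₀
    rw [← hSA]
    exact ⟨hg, by simpa using hgA₀⟩
end

section
/- Let G be a finite group generated by its elements of order p, let S be a Sylow p-subgroup of G, and let A = ω̄S be the minimal strongly closed subgroup of S containing all elements of order p in S. Then A = S if and only if A ≤ 𝒪_A(G). -/
theorem exists_conj_mem_of_orderOf_eq {G : Type*} [Group G] [Finite G] {p : ℕ} (hp : p.Prime)
    {S : Subgroup G} (hS : IsSylowIn p S ⊤) {x : G} (hx : orderOf x = p) :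
    ∃ g : G, g * x * g⁻¹ ∈ S := by
  have : Fact p.Prime := ⟨hp⟩
  let S' : Sylow p G :=
    { S with
      isPGroup' := hS.2.1
      is_maximal' := fun {Q} hQ hle => hS.2.2 Q le_top hQ hle }
  have hz : IsPGroup p (Subgroup.zpowers x) :=
    IsPGroup.of_card (n := 1) (by rw [Nat.card_zpowers, hx, pow_one])
  obtain ⟨P, hP⟩ := hz.exists_le_sylow
  obtain ⟨g, hg⟩ := MulAction.exists_smul_eq G P S'
  refine ⟨g, ?_⟩
  have hxP : x ∈ (P : Subgroup G) := hP (Subgroup.mem_zpowers x)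
  have h : g * x * g⁻¹ ∈ ((g • P : Sylow p G) : Subgroup G) :=
    Subgroup.smul_mem_pointwise_smul x (MulAut.conj g) (P : Subgroup G) hxP
  rw [hg] at h
  exact h

theorem omega_bar_eq_sylow_iff_le_O
    {G : Type*} [Group G] [Fintype G] {p : ℕ} (hp : p.Prime)
    (hgen : Subgroup.closure {x : G | orderOf x = p} = ⊤)
    (S A N : Subgroup G) (hS : IsSylowIn p S ⊤)
    (hAS : A ≤ S) (hΩ : Omega1 p S ≤ A) (hsc : IsStronglyClosedIn A S)
    (hmin : ∀ B : Subgroup G, B ≤ S → Omega1 p S ≤ B → IsStronglyClosedIn B S →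
      A ≤ B)
    (hN : N.Normal) (hNs : IsSylowIn p (A ⊓ N) N)
    (hNmax : ∀ M : Subgroup G, M.Normal → IsSylowIn p (A ⊓ M) M → M ≤ N) :
    A = S ↔ A ≤ N := by
  constructor
  · rintro rfl
    exact le_top.trans (hNmax ⊤ inferInstance (by rwa [inf_top_eq]))
  · intro hAN
    have hNtop : N = ⊤ := by
      rw [eq_top_iff, ← hgen, Subgroup.closure_le]
      intro x hx
      obtain ⟨g, hg⟩ := exists_conj_mem_of_orderOf_eq hp hS hx
      have ho : orderOf (g * x * g⁻¹) = p := by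
        rw [← MulAut.conj_apply, MulEquiv.orderOf_eq]
        exact hx
      have hgN : g * x * g⁻¹ ∈ N := hAN (hΩ (Subgroup.subset_closure ⟨hg, ho⟩))
      have h := hN.conj_mem _ hgN g⁻¹
      simpa [mul_assoc] using h
    rw [hNtop, inf_top_eq] at hNs
    exact (hNs.2.2 S le_top hS.2.1 hAS).symm
end
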